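/- Let α ∈ (0,1) and let z be a complex number with Re z ≥ 0. Then, with z^α the principal branch of the complex power (and 0^α = 0), z^α = (α/Γ(1−α)) · ∫₀^∞ (1 − e^{−zy}) · y^{−α−1} dy, the integral being absolutely convergent. -/

import Mathlib

open Complex MeasureTheory

/-!
Write `F z = ∫₀^∞ (1 - e^{-zy}) y^{-a-1} dy`. Differentiating under the integral sign gives
`F' z = ∫₀^∞ e^{-zy} y^{-a} dy` for `Re z > 0`, and an integration by parts gives `z F' z = a F z`.
Hence `F z = z^a F 1` on the open half-plane, and the same integration by parts at `z = 1` gives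
`Γ(1 - a) = a F 1`. Both sides are continuous on the closed half-plane, which settles the
imaginary axis.
-/

open Set Filter Topology

section Integrand

variable {s w z : ℂ} {y : ℝ}

lemma norm_exp_le_one_of_re_nonpos (hw : w.re ≤ 0) : ‖exp w‖ ≤ 1 := by
  rw [norm_exp]
  exact Real.exp_le_one_iff.2 hw

lemma norm_one_sub_exp_neg_le_two (hw : 0 ≤ w.re) : ‖1 - exp (-w)‖ ≤ 2 := by
  have hexp : ‖exp (-w)‖ ≤ 1 := norm_exp_le_one_of_re_nonpos (by simpa using hw)
  calc ‖1 - exp (-w)‖ ≤ ‖(1 : ℂ)‖ + ‖exp (-w)‖ := norm_sub_le _ _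
    _ ≤ 2 := by rw [norm_one]; linarith

lemma norm_one_sub_exp_neg_le_norm (hw : 0 ≤ w.re) : ‖1 - exp (-w)‖ ≤ ‖w‖ := by
  simpa using (convex_halfSpace_re_le 0).norm_image_sub_le_of_norm_hasDerivWithin_le
    (fun v _ => (hasDerivAt_exp v).hasDerivWithinAt) (fun v hv => norm_exp_le_one_of_re_nonpos hv)
    (show -w ∈ {v : ℂ | v.re ≤ 0} by simpa using hw) (show (0 : ℂ) ∈ {v : ℂ | v.re ≤ 0} by simp)

lemma norm_one_sub_exp_neg_mul_cpow_le (hz : 0 ≤ z.re) (hy : 0 < y) :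
    ‖(1 - exp (-(z * y))) * (y : ℂ) ^ s‖ ≤ min 2 (‖z‖ * y) * y ^ s.re := by
  have hzy : 0 ≤ (z * y).re := by
    rw [re_mul_ofReal]
    positivity
  have hnorm : ‖z * y‖ = ‖z‖ * y := by rw [norm_mul, Complex.norm_of_nonneg hy.le]
  rw [norm_mul, norm_cpow_eq_rpow_re_of_pos hy]
  gcongr
  exact le_min (norm_one_sub_exp_neg_le_two hzy) (hnorm ▸ norm_one_sub_exp_neg_le_norm hzy)

lemma integrableOn_min_mul_rpow {b c r : ℝ} (hb : 0 ≤ b) (hc : 0 ≤ c)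
    (hr : r ∈ Ioo (-2) (-1)) : IntegrableOn (fun y : ℝ => min b (c * y) * y ^ r) (Ioi 0) := by
  have hmeas : Measurable fun y : ℝ => min b (c * y) * y ^ r := by fun_prop
  have hnonneg : ∀ y : ℝ, 0 < y → 0 ≤ min b (c * y) * y ^ r := fun y hy => by positivity
  have hzero : IntegrableOn (fun y : ℝ => y ^ (1 + r)) (Ioc 0 1) :=
    (intervalIntegrable_iff_integrableOn_Ioc_of_le zero_le_one).1
      (intervalIntegral.intervalIntegrable_rpow' (by linarith [hr.1]))
  rw [← Ioc_union_Ioi_eq_Ioi (zero_le_one' ℝ)]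
  refine IntegrableOn.union ?_ ?_
  · refine (hzero.const_mul c).mono' hmeas.aestronglyMeasurable ?_
    filter_upwards [ae_restrict_mem measurableSet_Ioc] with y hy
    have hy0 : 0 < y := hy.1
    rw [Real.norm_of_nonneg (hnonneg y hy0), Real.rpow_add hy0, Real.rpow_one, ← mul_assoc]
    gcongr
    exact min_le_right _ _
  · refine ((integrableOn_Ioi_rpow_of_lt hr.2 one_pos).const_mul b).mono'
      hmeas.aestronglyMeasurable ?_
    filter_upwards [ae_restrict_mem measurableSet_Ioi] with y hy
    have hy0 : 0 < y := one_pos.trans hy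
    rw [Real.norm_of_nonneg (hnonneg y hy0)]
    gcongr
    exact min_le_left _ _

lemma measurable_one_sub_exp_neg_mul_cpow (s z : ℂ) :
    Measurable fun y : ℝ => (1 - exp (-(z * y))) * (y : ℂ) ^ s := by
  fun_prop

lemma integrableOn_one_sub_exp_neg_mul_cpow (hs : s.re ∈ Ioo (-2) (-1)) (hz : 0 ≤ z.re) :
    IntegrableOn (fun y : ℝ => (1 - exp (-(z * y))) * (y : ℂ) ^ s) (Ioi 0) := by
  refine (integrableOn_min_mul_rpow zero_le_two (norm_nonneg z) hs).mono'
    (measurable_one_sub_exp_neg_mul_cpow s z).aestronglyMeasurable ?_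
  filter_upwards [ae_restrict_mem measurableSet_Ioi] with y hy
  exact norm_one_sub_exp_neg_mul_cpow_le hz hy

lemma tendsto_one_sub_exp_neg_mul_cpow_nhdsGT_zero (hs : -1 < s.re) (hz : 0 ≤ z.re) :
    Tendsto (fun y : ℝ => (1 - exp (-(z * y))) * (y : ℂ) ^ s) (𝓝[>] 0) (𝓝 0) := by
  have hlim : Tendsto (fun y : ℝ => ‖z‖ * y ^ (1 + s.re)) (𝓝[>] 0) (𝓝 0) := by
    have hexp : 0 < 1 + s.re := by linarith
    have hcont := (Real.continuousAt_rpow_const 0 (1 + s.re) (Or.inr hexp.le)).tendsto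
    simpa [Real.zero_rpow hexp.ne'] using (hcont.mono_left nhdsWithin_le_nhds).const_mul ‖z‖
  refine squeeze_zero_norm' ?_ hlim
  filter_upwards [self_mem_nhdsWithin] with y hy
  have hy0 : 0 < y := hy
  calc _ ≤ min 2 (‖z‖ * y) * y ^ s.re := norm_one_sub_exp_neg_mul_cpow_le hz hy0
    _ ≤ ‖z‖ * y * y ^ s.re := by gcongr; exact min_le_right _ _
    _ = ‖z‖ * y ^ (1 + s.re) := by rw [Real.rpow_add hy0, Real.rpow_one, mul_assoc]

lemma tendsto_one_sub_exp_neg_mul_cpow_atTop (hs : s.re < 0) (hz : 0 ≤ z.re) :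
    Tendsto (fun y : ℝ => (1 - exp (-(z * y))) * (y : ℂ) ^ s) atTop (𝓝 0) := by
  have hlim : Tendsto (fun y : ℝ => 2 * y ^ s.re) atTop (𝓝 0) := by
    simpa using (tendsto_rpow_neg_atTop (neg_pos.2 hs)).const_mul 2
  refine squeeze_zero_norm' ?_ hlim
  filter_upwards [eventually_gt_atTop 0] with y hy
  calc _ ≤ min 2 (‖z‖ * y) * y ^ s.re := norm_one_sub_exp_neg_mul_cpow_le hz hy
    _ ≤ 2 * y ^ s.re := by gcongr; exact min_le_left _ _

lemma norm_exp_neg_mul_cpow (hy : 0 < y) :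
    ‖exp (-(z * y)) * (y : ℂ) ^ s‖ = y ^ s.re * Real.exp (-z.re * y) := by
  rw [norm_mul, norm_exp, norm_cpow_eq_rpow_re_of_pos hy, neg_re, re_mul_ofReal, neg_mul, mul_comm]

lemma integrableOn_rpow_mul_exp_neg_mul {r c : ℝ} (hr : -1 < r) (hc : 0 < c) :
    IntegrableOn (fun y : ℝ => y ^ r * Real.exp (-c * y)) (Ioi 0) := by
  simpa only [Real.rpow_one] using integrableOn_rpow_mul_exp_neg_mul_rpow hr one_pos hc

lemma integrableOn_exp_neg_mul_cpow (hs : -1 < s.re) (hz : 0 < z.re) :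
    IntegrableOn (fun y : ℝ => exp (-(z * y)) * (y : ℂ) ^ s) (Ioi 0) := by
  have hmeas : Measurable fun y : ℝ => exp (-(z * y)) * (y : ℂ) ^ s := by fun_prop
  refine (integrableOn_rpow_mul_exp_neg_mul hs hz).mono' hmeas.aestronglyMeasurable ?_
  filter_upwards [ae_restrict_mem measurableSet_Ioi] with y hy
  exact (norm_exp_neg_mul_cpow hy).le

lemma hasDerivAt_exp_neg_mul (c w : ℂ) :
    HasDerivAt (fun v => exp (-(v * c))) (-(c * exp (-(w * c)))) w := by
  simpa [mul_comm] using ((hasDerivAt_id w).mul_const c).fun_neg.cexp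

end Integrand

section Integral

variable {a z : ℂ}

lemma neg_sub_one_re_mem_Ioo (ha : a.re ∈ Ioo 0 1) : (-a - 1).re ∈ Ioo (-2) (-1) := by
  rw [sub_re, neg_re, one_re]
  constructor <;> linarith [ha.1, ha.2]

lemma continuousOn_integral_one_sub_exp_neg_mul_cpow (ha : a.re ∈ Ioo 0 1) :
    ContinuousOn (fun w : ℂ => ∫ y in Ioi (0 : ℝ), (1 - exp (-(w * y))) * (y : ℂ) ^ (-a - 1))
      {w | 0 ≤ w.re} := by
  intro z _
  refine continuousWithinAt_of_dominated
    (bound := fun y => min 2 ((‖z‖ + 1) * y) * y ^ (-a - 1).re)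
    (.of_forall fun w => (measurable_one_sub_exp_neg_mul_cpow _ w).aestronglyMeasurable) ?_
    (integrableOn_min_mul_rpow zero_le_two (by positivity) (neg_sub_one_re_mem_Ioo ha))
    (.of_forall fun y => by fun_prop)
  have hnorm : ∀ᶠ w in 𝓝[{w : ℂ | 0 ≤ w.re}] z, ‖w‖ < ‖z‖ + 1 :=
    continuous_norm.continuousWithinAt.eventually_lt_const (lt_add_one _)
  filter_upwards [hnorm, self_mem_nhdsWithin] with w hw hw0
  filter_upwards [ae_restrict_mem measurableSet_Ioi] with y hy
  have hy0 : 0 < y := hy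
  refine (norm_one_sub_exp_neg_mul_cpow_le hw0 hy0).trans ?_
  gcongr

lemma hasDerivAt_integral_one_sub_exp_neg_mul_cpow (ha : a.re ∈ Ioo 0 1)
    (hz : 0 < z.re) :
    HasDerivAt (fun w : ℂ => ∫ y in Ioi (0 : ℝ), (1 - exp (-(w * y))) * (y : ℂ) ^ (-a - 1))
      (∫ y in Ioi (0 : ℝ), exp (-(z * y)) * (y : ℂ) ^ (-a)) z := by
  refine (hasDerivAt_integral_of_dominated_loc_of_deriv_le
    (F := fun w (y : ℝ) => (1 - exp (-(w * y))) * (y : ℂ) ^ (-a - 1))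
    (F' := fun w (y : ℝ) => exp (-(w * y)) * (y : ℂ) ^ (-a))
    (bound := fun y => y ^ (-a).re * Real.exp (-(z.re / 2) * y)) (s := {w | z.re / 2 < w.re})
    ((isOpen_lt continuous_const continuous_re).mem_nhds (half_lt_self hz))
    (.of_forall fun w => (measurable_one_sub_exp_neg_mul_cpow _ w).aestronglyMeasurable)
    (integrableOn_one_sub_exp_neg_mul_cpow (neg_sub_one_re_mem_Ioo ha) hz.le)
    (integrableOn_exp_neg_mul_cpow (by simpa using ha.2) hz).aestronglyMeasurable ?_
    (integrableOn_rpow_mul_exp_neg_mul (by simpa using ha.2) (half_pos hz)) ?_).2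
  · filter_upwards [ae_restrict_mem measurableSet_Ioi] with y hy w hw
    have hy0 : 0 < y := hy
    rw [norm_exp_neg_mul_cpow hy0]
    gcongr
  · filter_upwards [ae_restrict_mem measurableSet_Ioi] with y hy w _
    have hy0 : (y : ℂ) ≠ 0 := ofReal_ne_zero.2 (ne_of_gt hy)
    refine (((hasDerivAt_exp_neg_mul y w).const_sub 1).mul_const _).congr_deriv ?_
    rw [cpow_sub _ _ hy0, cpow_one]
    field_simp

lemma mul_integral_exp_neg_mul_cpow (ha : a.re ∈ Ioo 0 1) (hz : 0 < z.re) :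
    z * ∫ y in Ioi (0 : ℝ), exp (-(z * y)) * (y : ℂ) ^ (-a) =
      a * ∫ y in Ioi (0 : ℝ), (1 - exp (-(z * y))) * (y : ℂ) ^ (-a - 1) := by
  have ha0 : -a ≠ 0 := neg_ne_zero.2 (ne_zero_of_re_pos ha.1)
  have hu (y : ℝ) : HasDerivAt (fun y : ℝ => 1 - exp (-(z * y))) (z * exp (-(z * y))) y := by
    simpa [mul_comm] using ((hasDerivAt_exp_neg_mul z y).const_sub 1).comp_ofReal
  have hv (y : ℝ) (hy : y ∈ Ioi 0) :
      HasDerivAt (fun y : ℝ => (y : ℂ) ^ (-a)) (-a * (y : ℂ) ^ (-a - 1)) y :=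
    hasDerivAt_ofReal_cpow_const (ne_of_gt hy) ha0
  have hudv : IntegrableOn
      (fun y : ℝ => (1 - exp (-(z * y))) * (-a * (y : ℂ) ^ (-a - 1))) (Ioi 0) :=
    ((integrableOn_one_sub_exp_neg_mul_cpow (neg_sub_one_re_mem_Ioo ha) hz.le).const_mul (-a)).congr
      (.of_forall fun y => mul_left_comm _ _ _)
  have hvdu : IntegrableOn (fun y : ℝ => z * exp (-(z * y)) * (y : ℂ) ^ (-a)) (Ioi 0) :=
    ((integrableOn_exp_neg_mul_cpow (by simpa using ha.2) hz).const_mul z).congr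
      (.of_forall fun y => (mul_assoc _ _ _).symm)
  have hparts := integral_Ioi_mul_deriv_eq_deriv_mul (fun y _ => hu y) hv hudv hvdu
    (tendsto_one_sub_exp_neg_mul_cpow_nhdsGT_zero (by simpa using ha.2) hz.le)
    (tendsto_one_sub_exp_neg_mul_cpow_atTop (by simpa using ha.1) hz.le)
  simp only [mul_left_comm _ (-a), mul_assoc, integral_const_mul] at hparts
  linear_combination hparts

lemma mul_integral_one_sub_exp_neg_cpow (ha : a.re ∈ Ioo 0 1) :
    a * ∫ y in Ioi (0 : ℝ), (1 - exp (-y)) * (y : ℂ) ^ (-a - 1) = Gamma (1 - a) := by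
  have hparts := mul_integral_exp_neg_mul_cpow ha (z := 1) (by simp)
  simp only [one_mul] at hparts
  rw [← hparts, Gamma_eq_integral (by simpa using ha.2), GammaIntegral]
  simp

lemma integral_one_sub_exp_neg_mul_cpow_of_re_pos (ha : a.re ∈ Ioo 0 1) (hz : 0 < z.re) :
    ∫ y in Ioi (0 : ℝ), (1 - exp (-(z * y))) * (y : ℂ) ^ (-a - 1) = Gamma (1 - a) / a * z ^ a := by
  set F : ℂ → ℂ := fun w => ∫ y in Ioi (0 : ℝ), (1 - exp (-(w * y))) * (y : ℂ) ^ (-a - 1)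
  have hderiv (w : ℂ) (hw : 0 < w.re) : HasDerivAt (fun w => F w * w ^ (-a)) 0 w := by
    have hw0 : w ≠ 0 := ne_zero_of_re_pos hw
    have heuler := mul_integral_exp_neg_mul_cpow ha hw
    refine ((hasDerivAt_integral_one_sub_exp_neg_mul_cpow ha hw).mul
      ((hasDerivAt_id w).cpow_const (Or.inl hw))).congr_deriv ?_
    rw [id, cpow_sub _ _ hw0, cpow_one]
    field_simp
    linear_combination w ^ (-a) * heuler
  have hconst : F z * z ^ (-a) = F 1 * 1 ^ (-a) :=
    (isOpen_lt continuous_const continuous_re).is_const_of_deriv_eq_zero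
      (convex_halfSpace_re_gt 0).isPreconnected
      (fun w hw => (hderiv w hw).differentiableAt.differentiableWithinAt)
      (fun w hw => (hderiv w hw).deriv) hz (by simp)
  have hone : a * F 1 = Gamma (1 - a) := by
    simpa only [F, one_mul] using mul_integral_one_sub_exp_neg_cpow ha
  have ha0 : a ≠ 0 := ne_zero_of_re_pos ha.1
  have hza : z ^ a ≠ 0 := by simp [cpow_eq_zero_iff, ne_zero_of_re_pos hz]
  rw [one_cpow, mul_one, cpow_neg, ← div_eq_mul_inv, div_eq_iff hza] at hconst
  rw [← hone, mul_div_cancel_left₀ _ ha0, ← hconst]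

lemma integral_one_sub_exp_neg_mul_cpow (ha : a.re ∈ Ioo 0 1) (hz : 0 ≤ z.re) :
    ∫ y in Ioi (0 : ℝ), (1 - exp (-(z * y))) * (y : ℂ) ^ (-a - 1) = Gamma (1 - a) / a * z ^ a := by
  have heq : EqOn (fun w : ℂ => ∫ y in Ioi (0 : ℝ), (1 - exp (-(w * y))) * (y : ℂ) ^ (-a - 1))
      (fun w => Gamma (1 - a) / a * w ^ a) {w | 0 < w.re} :=
    fun w hw => integral_one_sub_exp_neg_mul_cpow_of_re_pos ha hw
  have hcpow : ContinuousOn (fun w : ℂ => w ^ a) {w | 0 ≤ w.re} := fun w hw =>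
    (continuousAt_cpow_const_of_re_pos (Or.inl hw) ha.1).continuousWithinAt
  exact heq.of_subset_closure (continuousOn_integral_one_sub_exp_neg_mul_cpow ha)
    (hcpow.const_mul _) (fun w (hw : 0 < w.re) => hw.le)
    (closure_setOfPred_lt_re 0).ge hz

end Integral

theorem cpow_integral_representation_alpha_lt_one_general {a z : ℂ} (ha : a.re ∈ Ioo 0 1)
    (hz : 0 ≤ z.re) :
    IntegrableOn (fun y : ℝ => (1 - exp (-(z * y))) * (y : ℂ) ^ (-a - 1)) (Ioi 0) ∧
    z ^ a = a / Gamma (1 - a) *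
      ∫ y in Ioi (0 : ℝ), (1 - exp (-(z * y))) * (y : ℂ) ^ (-a - 1) := by
  refine ⟨integrableOn_one_sub_exp_neg_mul_cpow (neg_sub_one_re_mem_Ioo ha) hz, ?_⟩
  have ha0 : a ≠ 0 := ne_zero_of_re_pos ha.1
  have hGamma : Gamma (1 - a) ≠ 0 := Gamma_ne_zero_of_re_pos (by simpa using ha.2)
  rw [integral_one_sub_exp_neg_mul_cpow ha hz]
  field_simp

lemma eqOn_mul_ofReal_rpow (f : ℝ → ℂ) (r : ℝ) :
    EqOn (fun y : ℝ => f y * ((y ^ r : ℝ) : ℂ)) (fun y => f y * (y : ℂ) ^ (r : ℂ)) (Ioi 0) :=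
  fun y hy => by simp only [ofReal_cpow (le_of_lt hy)]

/-- For `α ∈ (0,1)` and `z ∈ ℂ` with `Re z ≥ 0`, with `z^α` the principal branch
of the complex power, `z^α = (α/Γ(1−α))·∫₀^∞ (1 − e^{−zy})·y^{−α−1} dy`, the
integral being absolutely convergent. -/
theorem cpow_integral_representation_alpha_lt_one (α : ℝ) (hα : α ∈ Set.Ioo (0:ℝ) 1)
    (z : ℂ) (hz : 0 ≤ z.re) :
    IntegrableOn (fun y : ℝ =>
        (1 - Complex.exp (-(z * (y : ℂ)))) * ((y ^ (-α - 1) : ℝ) : ℂ)) (Set.Ioi 0) ∧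
    z ^ (α : ℂ) = ((α / Real.Gamma (1 - α) : ℝ) : ℂ) *
      ∫ y in Set.Ioi (0:ℝ), (1 - Complex.exp (-(z * (y : ℂ)))) * ((y ^ (-α - 1) : ℝ) : ℂ) := by
  have hkernel := eqOn_mul_ofReal_rpow (fun y => 1 - exp (-(z * y))) (-α - 1)
  rw [integrableOn_congr_fun hkernel measurableSet_Ioi,
    setIntegral_congr_fun measurableSet_Ioi hkernel]
  simpa [← Gamma_ofReal] using cpow_integral_representation_alpha_lt_one_general (a := α) hα hz
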